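/- Let n ≥ 1 be an integer, p a prime with p > n, and k ≥ 1. For any function f : (ℤ/p^kℤ)ⁿ → ℕ that is not identically zero one has ∑_{x ∈ (ℤ/p^kℤ)ⁿ} f(x)ⁿ ≥ C · |ℙ(ℤ/p^kℤ)^{n-1}|^{-1} · ∑_{u ∈ ℙ(ℤ/p^kℤ)^{n-1}} f*(u)ⁿ, where C = ( ⌈log_p(max_u f*(u))⌉ + 1 )^{-n} · (1 + n/p)^{-n}. -/

import Mathlib

/-- A vector in `(ℤ/Nℤ)ⁿ` is primitive (for `N = p^k`: some coordinate is a unit). -/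
def IsPrimitiveVec {N n : ℕ} (u : Fin n → ZMod N) : Prop :=
  ∃ v : Fin n → ZMod N, ∑ i, v i * u i = 1

/-- `P` is a fixed set of representatives for the projective space `ℙ(ℤ/Nℤ)^{n-1}`. -/
def IsProjRepSet (N n : ℕ) [NeZero N] (P : Finset (Fin n → ZMod N)) : Prop :=
  (∀ u ∈ P, IsPrimitiveVec u) ∧
  ∀ u : Fin n → ZMod N, IsPrimitiveVec u →
    ∃! w, w ∈ P ∧ ∃ c : (ZMod N)ˣ, u = (c : ZMod N) • w

/-- The maximal function of `f : (ℤ/Nℤ)ⁿ → ℕ` in direction `u`: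
the largest sum of `f` over a line in direction `u`. -/
def fstar {N n : ℕ} [NeZero N] (f : (Fin n → ZMod N) → ℕ) (u : Fin n → ZMod N) : ℕ :=
  Finset.univ.sup fun a : Fin n → ZMod N => ∑ t : ZMod N, f (a + t • u)


open Polynomial

/-- multi-indices of degree less than `M` -/
noncomputable def jetset (n M : ℕ) : Finset (Fin n →₀ ℕ) :=
  (Finset.range M).biUnion fun m => Finset.finsuppAntidiag Finset.univ m

lemma mem_jetset {n M : ℕ} {α : Fin n →₀ ℕ} : α ∈ jetset n M ↔ ∑ j, α j < M := by
  simp [jetset, Finset.mem_finsuppAntidiag]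

lemma card_jetset (n M : ℕ) (hn : 1 ≤ n) : (jetset n M).card = (M + n - 1).choose n := by
  rw [jetset, Finset.card_biUnion]
  · simp only [Finset.card_finsuppAntidiag_nat_eq_choose, Finset.card_univ, Fintype.card_fin]
    obtain ⟨n, rfl⟩ := Nat.exists_eq_succ_of_ne_zero (by omega : n ≠ 0)
    induction M with
    | zero => simp
    | succ M ih =>
      rw [Finset.sum_range_succ, ih]
      have h1 : M + n.succ - 1 = M + n := by omega
      have h2 : M + 1 + n.succ - 1 = M + n + 1 := by omega
      have h3 : n.succ + M - 1 = M + n := by omega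
      rw [h1, h2, h3, Nat.choose_succ_succ, add_comm, Nat.choose_symm_add]
  · intro a _ b _ hab
    rw [Function.onFun, Finset.disjoint_left]
    intro x hx hx'
    rw [Finset.mem_finsuppAntidiag] at hx hx'
    exact hab (hx.1.symm.trans hx'.1)

lemma fact_mul_card_jetset (n M : ℕ) (hn : 1 ≤ n) :
    n.factorial * (jetset n M).card = M.ascFactorial n := by
  rw [card_jetset n M hn, Nat.ascFactorial_eq_factorial_mul_choose']

lemma jetset_lower (n M : ℕ) (hn : 1 ≤ n) :
    M ^ n ≤ n.factorial * (jetset n M).card := by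
  rw [fact_mul_card_jetset n M hn]
  exact Nat.pow_succ_le_ascFactorial _ _

lemma jetset_upper (n p a : ℕ) (hn : 1 ≤ n) (hp : 1 ≤ p) :
    (n.factorial : ℝ) * (jetset n (p * a)).card ≤ ((p : ℝ) * a) ^ n * (1 + (n : ℝ) / p) ^ n := by
  have h := fact_mul_card_jetset n (p * a) hn
  have h' : (n.factorial : ℝ) * (jetset n (p * a)).card = ((p * a).ascFactorial n : ℕ) := by
    exact_mod_cast h
  rw [h', ← mul_pow]
  rcases Nat.eq_zero_or_pos a with rfl | ha
  · obtain ⟨n, rfl⟩ := Nat.exists_eq_succ_of_ne_zero (by omega : n ≠ 0)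
    rw [mul_zero, Nat.zero_ascFactorial, Nat.cast_zero]
    positivity
  · have h2 : (p * a).ascFactorial n ≤ (p * a + n) ^ n := by
      rw [Nat.ascFactorial_eq_prod_range]
      calc _ ≤ ∏ i ∈ Finset.range n, (p * a + n) :=
            Finset.prod_le_prod' fun i hi => by have := Finset.mem_range.1 hi; omega
        _ = _ := by simp
    calc (((p * a).ascFactorial n : ℕ) : ℝ) ≤ (((p * a + n) ^ n : ℕ) : ℝ) := by exact_mod_cast h2
      _ = ((p : ℝ) * a + n) ^ n := by push_cast; rfl
      _ ≤ _ := by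
        gcongr
        have hp' : (0:ℝ) < p := by exact_mod_cast hp
        have ha' : (1:ℝ) ≤ a := by exact_mod_cast ha
        have : (p : ℝ) * a * (1 + n / p) = p * a + a * n := by field_simp
        rw [this]
        have : (n : ℝ) ≤ a * n := le_mul_of_one_le_left (by positivity) ha'
        linarith




lemma exists_setup (p N k : ℕ) (hp : p.Prime) (hN : N = p ^ k) :
    ∃ (O : ValuationSubring ℂ) (ζ : O), CharP (IsLocalRing.ResidueField O) p ∧
      IsPrimitiveRoot ζ N ∧ IsLocalRing.residue O ζ = 1 := by
  have hpu : ∀ z : ℤ, (p : ℂ) * z ≠ 1 := by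
    intro z hz
    have : (p : ℤ) * z = 1 := by exact_mod_cast hz
    have h2 := Int.isUnit_iff.1 (IsUnit.of_mul_eq_one _ this)
    have := hp.two_le
    omega
  obtain ⟨O, -, hO⟩ := Ideal.image_subset_nonunits_valuationSubring
    (A := (Int.castRingHom ℂ).range) (Ideal.span {(p : (Int.castRingHom ℂ).range)}) (by
      rw [Ne, Ideal.span_singleton_eq_top]
      intro h
      obtain ⟨⟨b, z, rfl⟩, hb⟩ := isUnit_iff_exists_inv.1 h
      apply hpu z
      simpa using congrArg Subtype.val hb)
  have hpO : (p : ℂ) ∈ O.nonunits := hO ⟨(p : (Int.castRingHom ℂ).range), Ideal.subset_span rfl, by simp⟩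
  have hp0 : IsLocalRing.residue O (p : O) = 0 := by
    rw [IsLocalRing.residue_eq_zero_iff]
    rw [← SetLike.mem_coe, ← O.image_maximalIdeal] at hpO
    obtain ⟨x, hx, hxp⟩ := hpO
    have : x = (p : O) := Subtype.ext (by simpa using hxp)
    rwa [← this]
  have hchar : CharP (IsLocalRing.ResidueField O) p := by
    have h0 : ((p : ℕ) : IsLocalRing.ResidueField O) = 0 := by
      simpa using hp0
    have := Fact.mk hp
    exact (CharP.charP_iff_prime_eq_zero hp).2 h0
  have hN0 : N ≠ 0 := by rw [hN]; exact pow_ne_zero _ hp.ne_zero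
  have hz := Complex.isPrimitiveRoot_exp N hN0
  set z := Complex.exp (2 * Real.pi * Complex.I / N) with hzdef
  have hzO : z ∈ O := by
    rcases O.mem_or_inv_mem z with h | h
    · exact h
    · have : z = (z⁻¹) ^ (N - 1) := by
        have hz0 : z ≠ 0 := Complex.exp_ne_zero _
        have h1 : z ^ N = 1 := hz.pow_eq_one
        obtain ⟨M, rfl⟩ := Nat.exists_eq_succ_of_ne_zero hN0
        simp only [Nat.succ_sub_one, inv_pow]
        rw [eq_comm, inv_eq_iff_eq_inv]
        apply eq_inv_of_mul_eq_one_left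
        rw [← h1, pow_succ]
      rw [this]
      exact pow_mem h _
  refine ⟨O, ⟨z, hzO⟩, hchar, ?_, ?_⟩
  · exact IsPrimitiveRoot.of_map_of_injective (f := O.subtype) (by simpa using hz) Subtype.val_injective
  · have h1 : (⟨z, hzO⟩ : O) ^ N = 1 := Subtype.ext (by simpa using hz.pow_eq_one)
    have h2 : IsLocalRing.residue O ⟨z, hzO⟩ ^ N = 1 := by rw [← map_pow, h1, map_one]
    have := Fact.mk hp
    rw [hN, ← sub_eq_zero, ← one_pow (p ^ k), ← sub_pow_char_pow] at h2
    exact sub_eq_zero.1 (eq_zero_of_pow_eq_zero h2)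

lemma indep_lift {O κ K : Type*} [CommRing O] [IsDomain O] [ValuationRing O] [Field κ] [Field K]
    [Algebra O K] [IsFractionRing O K] (φ : O →+* κ) {T V : Type*} [Fintype T]
    (R : T → V → O) (h : LinearIndependent κ (fun t v => φ (R t v))) :
    LinearIndependent K (fun t v => algebraMap O K (R t v)) := by
  rw [← LinearIndependent.iff_fractionRing O K]
  rw [Fintype.linearIndependent_iff]
  intro g hg
  by_contra hne
  push Not at hne
  obtain ⟨t0, ht0⟩ := hne
  have key : ∀ s : Finset T, s.Nonempty → ∃ m ∈ s, ∀ t ∈ s, g m ∣ g t := by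
    intro s hs
    induction hs using Finset.Nonempty.cons_induction with
    | singleton a => exact ⟨a, by simp, by simp⟩
    | cons a s ha hs ih =>
      obtain ⟨m, hm, hd⟩ := ih
      rcases ValuationRing.dvd_total (g m) (g a) with h | h
      · exact ⟨m, by simp [hm], by simpa [h] using hd⟩
      · exact ⟨a, by simp, by simpa using fun t ht => h.trans (hd t ht)⟩
  obtain ⟨m, -, hm⟩ := key Finset.univ ⟨t0, by simp⟩
  choose c hc using fun t => hm t (by simp)
  have hm0 : g m ≠ 0 := fun h0 => ht0 (by rw [hc t0, h0, zero_mul])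
  have hcm : c m = 1 := by
    have := hc m
    exact mul_left_cancel₀ hm0 (by rw [← this, mul_one])
  have hrel : ∀ v, ∑ t, c t * R t v = 0 := by
    intro v
    have := congrFun hg v
    simp only [Finset.sum_apply, Pi.smul_apply, Pi.zero_apply] at this
    simp only [Algebra.smul_def, ← map_mul, ← map_sum] at this
    rw [map_eq_zero_iff _ (IsFractionRing.injective O K)] at this
    apply mul_left_cancel₀ hm0
    rw [mul_zero, Finset.mul_sum, ← this]
    exact Finset.sum_congr rfl fun t _ => by rw [hc t]; ring
  rw [Fintype.linearIndependent_iff] at h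
  have := h (fun t => φ (c t)) (by
    ext v
    simp only [Finset.sum_apply, Pi.smul_apply, Pi.zero_apply, smul_eq_mul, ← map_mul, ← map_sum,
      hrel, map_zero]) m
  rw [hcm, map_one] at this
  exact one_ne_zero this

lemma dvd_of_jets {K : Type*} [Field K] {n : ℕ} {V : Type*} [Fintype V] (e : V → Fin n → ℕ)
    (c : V → K) (P : Fin n → K) (M : ℕ) (A : Fin n → K) (U : Fin n → ℕ) (τ : K)
    (hP : ∀ j, A j * τ ^ U j = P j)
    (hj : ∀ α : Fin n →₀ ℕ, ∑ j, α j < M →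
      MvPolynomial.coeff α (∑ v, MvPolynomial.C (c v) *
        ∏ j, (MvPolynomial.X j + MvPolynomial.C (P j)) ^ e v j) = 0) :
    (X - C τ) ^ M ∣ ∑ v, C (c v) * (C (∏ j, A j ^ e v j) * X ^ (∑ j, U j * e v j)) := by
  set Q := ∑ v, MvPolynomial.C (c v) *
        ∏ j, (MvPolynomial.X j + MvPolynomial.C (P j)) ^ e v j with hQ
  have h1 : MvPolynomial.aeval (fun j => C (A j) * X ^ U j - C (P j) : Fin n → K[X]) Q =
      ∑ v, C (c v) * (C (∏ j, A j ^ e v j) * X ^ (∑ j, U j * e v j)) := by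
    rw [hQ, map_sum]
    refine Finset.sum_congr rfl fun v _ => ?_
    rw [map_mul, map_prod, MvPolynomial.aeval_C]
    congr 1
    simp only [map_pow, map_add, MvPolynomial.aeval_X, MvPolynomial.aeval_C, algebraMap_eq,
      sub_add_cancel, mul_pow, Finset.prod_mul_distrib, map_prod]
    congr 1
    rw [← Finset.prod_pow_eq_pow_sum]
    exact Finset.prod_congr rfl fun j _ => by rw [pow_mul]
  rw [← h1, MvPolynomial.aeval_def, MvPolynomial.eval₂_eq']
  refine Finset.dvd_sum fun α hα => Dvd.dvd.mul_left ?_ _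
  have hM : M ≤ ∑ j, α j := by
    by_contra hlt
    exact MvPolynomial.mem_support_iff.1 hα (hj α (by omega))
  refine (pow_dvd_pow _ hM).trans ?_
  rw [← Finset.prod_pow_eq_pow_sum]
  refine Finset.prod_dvd_prod_of_dvd _ _ fun j _ => pow_dvd_pow_of_dvd ?_ _
  rw [dvd_iff_isRoot]
  simp [hP]

lemma residue_row {κ : Type*} [Field κ] (w A i : ℕ) (hi : i < A) :
    (taylor 1 ((X ^ w : κ[X]) %ₘ (X - C 1) ^ A)).coeff i = (w.choose i : κ) := by
  have hmon : ((X - C 1 : κ[X]) ^ A).Monic := (monic_X_sub_C 1).pow A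
  have h := modByMonic_add_div (X ^ w : κ[X]) ((X - C 1 : κ[X]) ^ A)
  have h2 := congrArg (fun q => (taylor 1 q).coeff i) h
  simp only [map_add, taylor_mul, taylor_pow, coeff_add, map_sub, taylor_X, taylor_C,
    add_sub_cancel_right, taylor_X] at h2
  rw [coeff_X_pow_mul', if_neg (by omega), add_zero, C_1, coeff_X_add_one_pow] at h2
  exact h2

set_option maxHeartbeats 1000000 in
lemma left_bound {O κ K : Type*} [CommRing O] [IsDomain O] [ValuationRing O] [Field κ] [Field K]
    [Algebra O K] [IsFractionRing O K] (φ : O →+* κ) (n p N : ℕ) [NeZero N]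
    (ζ : O) (hζ : IsPrimitiveRoot ζ N) (hφ : φ ζ = 1)
    (f : (Fin n → ZMod N) → ℕ) {T V : Type*} [Fintype T] [Fintype V]
    (U : T → Fin n → ℕ) (i : T → ℕ) (e : V → Fin n → ℕ)
    (hi : ∀ t, i t < p * fstar f (fun j => (U t j : ZMod N)))
    (hind : LinearIndependent κ
      (fun t v => (((∑ j, U t j * e v j).choose (i t) : ℕ) : κ))) :
    Fintype.card T ≤ ∑ x, (jetset n (p * f x)).card := by
  classical
  -- maximising base points
  have hex : ∀ t, ∃ a : Fin n → ZMod N,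
      fstar f (fun j => (U t j : ZMod N)) = ∑ s : ZMod N, f (a + s • fun j => (U t j : ZMod N)) := by
    intro t
    obtain ⟨a, -, ha⟩ := Finset.exists_mem_eq_sup (Finset.univ : Finset (Fin n → ZMod N))
      Finset.univ_nonempty
      (fun a => ∑ s : ZMod N, f (a + s • fun j => (U t j : ZMod N)))
    exact ⟨a, ha⟩
  choose a ha using hex
  let m : T → ZMod N → ℕ := fun t s => p * f (a t + s • fun j => (U t j : ZMod N))
  let h : T → O[X] := fun t => ∏ s : ZMod N, (X - C (ζ ^ s.val)) ^ m t s
  have hmon : ∀ t, (h t).Monic := fun t =>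
    monic_prod_of_monic _ _ fun s _ => (monic_X_sub_C _).pow _
  let G : T → V → O[X] := fun t v =>
    C (∏ j, (ζ ^ (a t j).val) ^ e v j) * X ^ (∑ j, U t j * e v j)
  let R : T → V → O := fun t v => (taylor 1 (G t v %ₘ h t)).coeff (i t)
  have hhφ : ∀ t, (h t).map φ = (X - C 1) ^ (p * fstar f (fun j => (U t j : ZMod N))) := by
    intro t
    simp only [h, Polynomial.map_prod, Polynomial.map_pow, Polynomial.map_sub, map_X, map_C,
      map_pow φ, hφ, one_pow]
    rw [Finset.prod_pow_eq_pow_sum, ha t, Finset.mul_sum]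
  have hR : ∀ t v, φ (R t v) = (((∑ j, U t j * e v j).choose (i t) : ℕ) : κ) := by
    intro t v
    simp only [R]
    rw [← coeff_map, map_taylor, map_modByMonic _ (hmon t), hhφ, map_one]
    have : (G t v).map φ = X ^ (∑ j, U t j * e v j) := by
      simp [G, hφ, Polynomial.map_prod]
    rw [this]
    exact residue_row _ _ _ (hi t)
  have hindK : LinearIndependent K (fun t v => algebraMap O K (R t v)) := by
    apply indep_lift φ
    simpa only [hR] using hind
  -- jets
  obtain ⟨ζK, hζKd⟩ : ∃ z : K, z = algebraMap O K ζ := ⟨_, rfl⟩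
  have hζK : IsPrimitiveRoot ζK N := by
    rw [hζKd]; exact hζ.map_of_injective (IsFractionRing.injective O K)
  have hcop : Pairwise (Function.onFun IsCoprime fun s : ZMod N => (X - C (ζK ^ s.val) : K[X])) := by
    refine pairwise_coprime_X_sub_C (s := fun s : ZMod N => ζK ^ s.val) ?_
    intro b b' hbb
    exact ZMod.val_injective N (hζK.pow_inj b.val_lt b'.val_lt hbb)
  let J := Σ x : Fin n → ZMod N, {α // α ∈ jetset n (p * f x)}
  let Lj : J → ((V → K) →ₗ[K] K) := fun q =>
    ∑ v, (MvPolynomial.coeff q.2.1 (∏ j, (MvPolynomial.X j +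
      MvPolynomial.C (ζK ^ (q.1 j).val)) ^ e v j : MvPolynomial (Fin n) K)) • LinearMap.proj v
  have hLj : ∀ q c, Lj q c = MvPolynomial.coeff q.2.1 (∑ v, MvPolynomial.C (c v) *
        ∏ j, (MvPolynomial.X j + MvPolynomial.C (ζK ^ (q.1 j).val)) ^ e v j) := by
    intro q c
    simp [Lj, MvPolynomial.coeff_sum, MvPolynomial.coeff_C_mul, mul_comm]
  let Rl : T → ((V → K) →ₗ[K] K) := fun t => ∑ v, algebraMap O K (R t v) • LinearMap.proj v
  have hRl : LinearIndependent K Rl := by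
    rw [Fintype.linearIndependent_iff] at hindK ⊢
    intro g hg
    apply hindK
    ext v
    have := LinearMap.congr_fun hg (Pi.single v 1)
    simpa [Rl, Finset.sum_apply, Pi.single_apply, Algebra.smul_def, mul_comm] using this
  have hspan : ∀ t, Rl t ∈ Submodule.span K (Set.range Lj) := by
    intro t
    apply mem_span_of_iInf_ker_le_ker
    intro c hc
    rw [Submodule.mem_iInf] at hc
    simp only [LinearMap.mem_ker] at hc ⊢
    let GK : K[X] := ∑ v, C (c v) * (G t v).map (algebraMap O K)
    have hdvd : (h t).map (algebraMap O K) ∣ GK := by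
      simp only [h, Polynomial.map_prod, Polynomial.map_pow, Polynomial.map_sub, map_X, map_C,
        map_pow (algebraMap O K), ← hζKd]
      apply Finset.prod_dvd_of_coprime
      · intro s _ s' _ hss
        apply IsCoprime.pow
        exact hcop hss
      · intro s _
        have := dvd_of_jets e c
          (fun j => ζK ^ ((a t + s • fun j => (U t j : ZMod N)) j).val) (m t s)
          (fun j => ζK ^ (a t j).val) (U t) (ζK ^ s.val) ?_ ?_
        · convert! this using 1
          simp only [GK, G]
          refine Finset.sum_congr rfl fun v _ => ?_
          simp [hζKd, Polynomial.map_prod]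
        · intro j
          rw [← pow_mul, ← pow_add]
          rw [pow_eq_pow_mod _ hζK.pow_eq_one,
            pow_eq_pow_mod (((a t + s • fun j => (U t j : ZMod N)) j).val) hζK.pow_eq_one]
          congr 1
          refine (ZMod.natCast_eq_natCast_iff _ _ N).1 ?_
          simp
        · intro α hα
          have := hc ⟨_, α, mem_jetset.2 hα⟩
          rw [hLj] at this
          exact this
    have hval : Rl t c = (taylor 1 (GK %ₘ (h t).map (algebraMap O K))).coeff (i t) := by
      have h1 : GK %ₘ (h t).map (algebraMap O K) =
          ∑ v, c v • ((G t v %ₘ h t).map (algebraMap O K)) := by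
        simp only [GK, map_modByMonic _ (hmon t), ← smul_eq_C_mul]
        rw [← modByMonicHom_apply, map_sum]
        simp only [map_smul, modByMonicHom_apply]
      rw [h1, map_sum, finsetSum_coeff]
      simp only [Rl, R]
      simp only [LinearMap.sum_apply, LinearMap.smul_apply, LinearMap.proj_apply, smul_eq_mul,
        map_smul, coeff_smul]
      refine Finset.sum_congr rfl fun v _ => ?_
      rw [mul_comm, ← coeff_map, map_taylor, map_one]
    rw [hval, (modByMonic_eq_zero_iff_dvd ((hmon t).map _)).2 hdvd]
    simp
  have hcard := linearIndependent_le_span' (R := K) Rl hRl (Set.range Lj)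
    (by rintro _ ⟨t, rfl⟩; exact hspan t)
  have h3 : Fintype.card (Set.range Lj) ≤ Fintype.card J := Fintype.card_range_le Lj
  have h4 : Fintype.card J = ∑ x, (jetset n (p * f x)).card := by
    simp only [J, Fintype.card_sigma, Fintype.card_coe]
  rw [Cardinal.mk_fintype, Nat.cast_le] at hcard
  omega

/-- exact order `r` of vanishing at `1` -/
def ExactOrd {κ : Type*} [Field κ] (P : κ[X]) (r : ℕ) : Prop :=
  ∃ Q : κ[X], P = (X - C 1) ^ r * Q ∧ Q.eval 1 ≠ 0

lemma ExactOrd.mul {κ : Type*} [Field κ] {P P' : κ[X]} {r r' : ℕ} (h : ExactOrd P r)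
    (h' : ExactOrd P' r') : ExactOrd (P * P') (r + r') := by
  obtain ⟨Q, rfl, hQ⟩ := h
  obtain ⟨Q', rfl, hQ'⟩ := h'
  exact ⟨Q * Q', by rw [pow_add]; ring, by rw [eval_mul]; exact mul_ne_zero hQ hQ'⟩

lemma ExactOrd.one {κ : Type*} [Field κ] : ExactOrd (1 : κ[X]) 0 := ⟨1, by simp, by simp⟩

lemma ExactOrd.prod {κ ι : Type*} [Field κ] (s : Finset ι) (P : ι → κ[X]) (r : ι → ℕ)
    (h : ∀ i ∈ s, ExactOrd (P i) (r i)) : ExactOrd (∏ i ∈ s, P i) (∑ i ∈ s, r i) := by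
  classical
  induction s using Finset.induction_on with
  | empty => simpa using ExactOrd.one
  | insert a s ha ih =>
    rw [Finset.prod_insert ha, Finset.sum_insert ha]
    exact (h a (by simp)).mul (ih fun i hi => h i (by simp [hi]))

lemma ExactOrd.le {κ : Type*} [Field κ] {P : κ[X]} {r A : ℕ} (h : ExactOrd P r)
    (hA : (X - C 1) ^ A ∣ P) : A ≤ r := by
  obtain ⟨Q, rfl, hQ⟩ := h
  by_contra hlt
  push Not at hlt
  have h1 : (X - C 1 : κ[X]) ^ (r + 1) ∣ (X - C 1) ^ r * Q := (pow_dvd_pow _ hlt).trans hA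
  rw [pow_succ] at h1
  have h2 := (mul_dvd_mul_iff_left (pow_ne_zero r (X_sub_C_ne_zero (1 : κ)))).1 h1
  exact hQ (dvd_iff_isRoot.1 h2)

lemma exactOrd_X_pow_sub_one {κ : Type*} [Field κ] (p : ℕ) [Fact p.Prime] [CharP κ p] (m : ℕ)
    (hm : m ≠ 0) : ExactOrd (X ^ m - 1 : κ[X]) (p ^ m.factorization p) := by
  have hmm := Nat.ordProj_mul_ordCompl_eq_self m p
  set v := m.factorization p
  set m' := m / p ^ v
  have hnd : ¬ p ∣ m' := Nat.not_dvd_ordCompl Fact.out hm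
  refine ⟨(∑ i ∈ Finset.range m', X ^ i) ^ (p ^ v), ?_, ?_⟩
  · rw [← mul_pow, C_1, mul_comm, geom_sum_mul, sub_pow_char_pow, one_pow, ← pow_mul,
      mul_comm, hmm]
  · rw [eval_pow]
    apply pow_ne_zero
    simp only [eval_finsetSum, eval_pow, eval_X, one_pow, Finset.sum_const, Finset.card_range,
      nsmul_eq_mul, mul_one]
    rwa [Ne, CharP.cast_eq_zero_iff κ p]

lemma exactOrd_vander {κ : Type*} [Field κ] (p : ℕ) [Fact p.Prime] [CharP κ p] (d : ℕ) :
    ExactOrd (∏ i ∈ Finset.range d, (X ^ d - X ^ i : κ[X]))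
      (∑ i ∈ Finset.range d, p ^ (d - i).factorization p) := by
  apply ExactOrd.prod
  intro i hi
  have hi' := Finset.mem_range.1 hi
  have h1 : (X ^ d - X ^ i : κ[X]) = X ^ i * (X ^ (d - i) - 1) := by
    rw [mul_sub, mul_one, ← pow_add]
    congr 2
    omega
  rw [h1, ← zero_add (p ^ _)]
  exact ExactOrd.mul ⟨X ^ i, by simp, by simp⟩ (exactOrd_X_pow_sub_one p _ (by omega))

lemma ord_sum_le (p : ℕ) (hp : p.Prime) (d L : ℕ) (hd : d < p ^ (L + 1)) :
    ∑ i ∈ Finset.range d, p ^ (d - i).factorization p ≤ (L + 1) * d := by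
  have h0 : ∑ i ∈ Finset.range d, p ^ (d - i).factorization p =
      ∑ i ∈ Finset.range d, p ^ (i + 1).factorization p := by
    rw [← Finset.sum_range_reflect]
    refine Finset.sum_congr rfl fun i hi => ?_
    have hi' := Finset.mem_range.1 hi
    congr 3
    omega
  rw [h0]
  calc ∑ i ∈ Finset.range d, p ^ (i + 1).factorization p
      ≤ ∑ i ∈ Finset.range d, ∑ s ∈ Finset.range (L + 1), if p ^ s ∣ i + 1 then p ^ s else 0 := by
        refine Finset.sum_le_sum fun i hi => ?_
        have hi' := Finset.mem_range.1 hi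
        have hdv := Nat.ordProj_dvd (i + 1) p
        have hle := Nat.le_of_dvd (by omega) hdv
        have hs : (i + 1).factorization p < L + 1 :=
          (Nat.pow_lt_pow_iff_right hp.one_lt).1 (by omega)
        have := Finset.single_le_sum (f := fun s => if p ^ s ∣ i + 1 then p ^ s else 0)
          (fun _ _ => Nat.zero_le _) (Finset.mem_range.2 hs)
        simpa [hdv] using this
    _ = ∑ s ∈ Finset.range (L + 1), ∑ i ∈ Finset.range d, if p ^ s ∣ i + 1 then p ^ s else 0 :=
        Finset.sum_comm
    _ ≤ ∑ s ∈ Finset.range (L + 1), d := by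
        refine Finset.sum_le_sum fun s _ => ?_
        rw [← Finset.sum_filter, Finset.sum_const, Nat.card_multiples, smul_eq_mul]
        exact Nat.div_mul_le_self d _
    _ = (L + 1) * d := by simp

lemma all_dirs {κ : Type*} [Field κ] (p : ℕ) (hp : p.Prime) (n A : ℕ) (hn : 1 ≤ n)
    (D : Finset (Fin n →₀ ℕ)) (c : (Fin n →₀ ℕ) → κ)
    (h : ∀ U : Fin n → ℕ, (∃ j, ¬ p ∣ U j) →
      (X - C 1) ^ A ∣ ∑ d ∈ D, C (c d) * X ^ (∑ j, U j * d j)) (J : Fin n → ℕ) :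
    (X - C 1) ^ A ∣ ∑ d ∈ D, C (c d) * X ^ (∑ j, J j * d j) := by
  obtain ⟨m, U, hU, hJ⟩ : ∃ (m : ℕ) (U : Fin n → ℕ), (∃ j, ¬ p ∣ U j) ∧ ∀ j, J j = m * U j := by
    by_cases h0 : ∀ j, J j = 0
    · exact ⟨0, fun _ => 1, ⟨⟨0, hn⟩, by simpa using hp.one_lt.ne'⟩, by simpa using h0⟩
    · push Not at h0
      obtain ⟨j0, hj0⟩ := h0
      obtain ⟨U, hU, hg⟩ := Finset.extract_gcd J (s := Finset.univ) ⟨j0, by simp⟩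
      refine ⟨_, U, ?_, fun j => hU j (by simp)⟩
      by_contra hall
      push Not at hall
      have := Finset.dvd_gcd (s := Finset.univ) (f := U) (fun j _ => hall j)
      rw [hg] at this
      exact hp.one_lt.ne' (Nat.dvd_one.1 this)
  have h1 := map_dvd (expand κ m) (h U hU)
  have h2 : (X - C 1 : κ[X]) ^ A ∣ expand κ m ((X - C 1) ^ A) := by
    rw [map_pow, map_sub, expand_X, expand_C]
    apply pow_dvd_pow_of_dvd
    simpa using sub_dvd_pow_sub_pow (X : κ[X]) 1 m
  refine h2.trans (h1.trans (dvd_of_eq ?_))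
  rw [map_sum]
  refine Finset.sum_congr rfl fun d _ => ?_
  rw [map_mul, expand_C, map_pow, expand_X, ← pow_mul, Finset.mul_sum]
  congr 2
  exact Finset.sum_congr rfl fun j _ => by rw [hJ j, mul_assoc]

lemma vanish {κ : Type*} [Field κ] (p : ℕ) [Fact p.Prime] [CharP κ p] (n A L D1 : ℕ) (hn : 1 ≤ n)
    (hA : A ≤ p ^ (L + 1)) (hD : ∀ s < D1, (L + 1) * s < A) (c : (Fin n →₀ ℕ) → κ)
    (h : ∀ U : Fin n → ℕ, (∃ j, ¬ p ∣ U j) →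
      (X - C 1) ^ A ∣ ∑ d ∈ jetset n D1, C (c d) * X ^ (∑ j, U j * d j)) :
    ∀ d ∈ jetset n D1, c d = 0 := by
  classical
  by_contra hne
  push Not at hne
  obtain ⟨d0, hd0, hcd0⟩ := hne
  obtain ⟨d, hd, hmax⟩ := Finset.exists_max_image ((jetset n D1).filter fun d => c d ≠ 0)
    (fun d => ∑ j, d j) ⟨d0, by simp [hd0, hcd0]⟩
  rw [Finset.mem_filter] at hd
  have hJ := all_dirs p Fact.out n A hn _ c h
  let w : Fin n → κ[X][X] := fun j => ∏ i ∈ Finset.range (d j), (X - C (X ^ i))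
  have hw : ∀ j (e : ℕ), (w j).eval (X ^ e) = ∏ i ∈ Finset.range (d j), (X ^ e - X ^ i) := by
    intro j e
    simp [w, eval_prod]
  have hsum : ∑ e ∈ jetset n D1, C (c e) * ∏ j, (w j).eval (X ^ e j) =
      C (c d) * ∏ j, (w j).eval (X ^ d j) := by
    apply Finset.sum_eq_single_of_mem d hd.1
    intro e he hed
    by_cases hce : c e = 0
    · simp [hce]
    have hle := hmax e (by simp [he, hce])
    obtain ⟨j, hj⟩ : ∃ j, e j < d j := by
      by_contra hall
      push Not at hall
      apply hed
      ext j
      by_contra hj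
      have : ∑ j, d j < ∑ j, e j := Finset.sum_lt_sum (fun j _ => hall j)
        ⟨j, by simp, lt_of_le_of_ne (hall j) (Ne.symm hj)⟩
      omega
    rw [Finset.prod_eq_zero (Finset.mem_univ j), mul_zero]
    rw [hw]
    exact Finset.prod_eq_zero (Finset.mem_range.2 hj) (sub_self _)
  have hdvd : (X - C 1) ^ A ∣ C (c d) * ∏ j, (w j).eval (X ^ d j) := by
    rw [← hsum]
    have h3 : ∀ e : Fin n →₀ ℕ, ∏ j, (w j).eval (X ^ e j) =
        ∑ S ∈ Fintype.piFinset (fun j => Finset.range ((w j).natDegree + 1)),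
          (∏ j, (w j).coeff (S j)) * X ^ (∑ j, S j * e j) := by
      intro e
      simp only [eval_eq_sum_range]
      rw [Finset.prod_univ_sum]
      refine Finset.sum_congr rfl fun S _ => ?_
      rw [Finset.prod_mul_distrib, ← Finset.prod_pow_eq_pow_sum]
      congr 1
      exact Finset.prod_congr rfl fun j _ => by rw [← pow_mul, mul_comm]
    simp only [h3, Finset.mul_sum]
    rw [Finset.sum_comm]
    refine Finset.dvd_sum fun S _ => ?_
    have := (hJ S).mul_left (∏ j, (w j).coeff (S j))
    convert! this using 1
    rw [Finset.mul_sum]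
    exact Finset.sum_congr rfl fun e _ => by ring
  have hord : ExactOrd (C (c d) * ∏ j, (w j).eval (X ^ d j))
      (0 + ∑ j, ∑ i ∈ Finset.range (d j), p ^ (d j - i).factorization p) := by
    apply ExactOrd.mul ⟨C (c d), by simp, by simpa using hd.2⟩
    apply ExactOrd.prod
    intro j _
    rw [hw]
    exact exactOrd_vander p (d j)
  have h4 := hord.le hdvd
  have hdD := hD _ (mem_jetset.1 hd.1)
  have h5 : ∑ j, ∑ i ∈ Finset.range (d j), p ^ (d j - i).factorization p ≤ ∑ j, (L + 1) * d j := by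
    refine Finset.sum_le_sum fun j _ => ord_sum_le p Fact.out _ L ?_
    have h6 : d j ≤ ∑ j, d j := Finset.single_le_sum (f := fun j => d j)
      (fun _ _ => Nat.zero_le _) (Finset.mem_univ j)
    have h7 : ∑ j, d j ≤ (L + 1) * ∑ j, d j := Nat.le_mul_of_pos_left _ (by omega)
    omega
  rw [← Finset.mul_sum] at h5
  omega

lemma choose_mod {κ : Type*} [Field κ] (p : ℕ) [Fact p.Prime] [CharP κ p] (K q : ℕ) (hq : q = p ^ K)
    (w i : ℕ) (hi : i < q) : (w.choose i : κ) = ((w % q).choose i : κ) := by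
  have h1 : ((X : κ[X]) + 1) ^ q = X ^ q + 1 := by
    subst hq; rw [add_pow_char_pow]; simp
  have h2 : ((X : κ[X]) ^ q) ∣ (X + 1) ^ w - (X + 1) ^ (w % q) := by
    have h3 : ((X : κ[X]) + 1) ^ w = (X + 1) ^ (w % q) * (X ^ q + 1) ^ (w / q) := by
      rw [← h1, ← pow_mul, ← pow_add, Nat.mod_add_div]
    have h4 := sub_dvd_pow_sub_pow ((X : κ[X]) ^ q + 1) 1 (w / q)
    rw [h3]
    obtain ⟨r, hr⟩ := h4
    refine ⟨(X + 1) ^ (w % q) * r, ?_⟩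
    have : ((X : κ[X]) ^ q + 1) ^ (w / q) = 1 + X ^ q * r := by
      rw [one_pow] at hr
      linear_combination hr
    rw [this]; ring
  have h5 := (X_pow_dvd_iff.1 h2) i hi
  rw [coeff_sub, coeff_X_add_one_pow, coeff_X_add_one_pow] at h5
  exact sub_eq_zero.1 h5

/-- the row of the tag `t` -/
def Row (κ : Type*) [Field κ] (n q : ℕ) (t : (Fin n → ZMod q) × Fin q) :
    (Fin n → ZMod q) → κ :=
  fun v => (((∑ j, t.1 j * v j : ZMod q).val.choose t.2 : ℕ) : κ)

lemma row_nat {κ : Type*} [Field κ] (p : ℕ) [Fact p.Prime] [CharP κ p] (K n q : ℕ) [NeZero q]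
    (hq : q = p ^ K) (U d : Fin n → ℕ) (i : Fin q) :
    Row κ n q (fun j => (U j : ZMod q), i) (fun j => (d j : ZMod q)) =
      (((∑ j, U j * d j).choose i : ℕ) : κ) := by
  rw [choose_mod p K q hq _ i i.2]
  simp only [Row]
  rw [← ZMod.val_natCast]
  push_cast
  rfl

lemma adapted {κ V ι : Type*} [Field κ] [AddCommGroup V] [Module κ V] (φ : ι → V) (S : Set ι)
    (lvl : ι → ℕ) (A : ℕ) :
    ∃ B ⊆ {t ∈ S | lvl t < A}, LinearIndepOn κ φ B ∧
      ∀ A' ≤ A, φ '' {t ∈ S | lvl t < A'} ⊆ Submodule.span κ (φ '' {t ∈ B | lvl t < A'}) := by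
  induction A with
  | zero =>
    refine ⟨∅, by simp, linearIndepOn_empty _ _, ?_⟩
    intro A' hA'
    obtain rfl : A' = 0 := by omega
    simp
  | succ A ih =>
    obtain ⟨B, hB, hi, hs⟩ := ih
    have hsub : B ⊆ {t ∈ S | lvl t < A + 1} := fun t ht => ⟨(hB ht).1, by have := (hB ht).2; omega⟩
    obtain ⟨B', h1, h2, h3, h4⟩ := exists_linearIndepOn_extension hi hsub
    refine ⟨B', h1, h4, ?_⟩
    intro A' hA'
    rcases Nat.lt_or_ge A A' with h | h
    · obtain rfl : A' = A + 1 := by omega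
      have : {t ∈ B' | lvl t < A + 1} = B' := by
        ext t; constructor
        · exact fun h => h.1
        · exact fun h => ⟨h, (h1 h).2⟩
      rw [this]; exact h3
    · refine (hs A' h).trans ?_
      apply Submodule.span_mono
      apply Set.image_mono
      exact fun t ht => ⟨h2 ht.1, ht.2⟩

lemma right_count {κ : Type*} [Field κ] (p : ℕ) [Fact p.Prime] [CharP κ p] (n A L D1 K q : ℕ)
    [NeZero q] (hq : q = p ^ K) (hn : 1 ≤ n)
    (hA : A ≤ p ^ (L + 1)) (hAq : A ≤ q) (hD : ∀ s < D1, (L + 1) * s < A)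
    (B : Finset ((Fin n → ZMod q) × Fin q))
    (hB : ∀ t : (Fin n → ZMod q) × Fin q, IsPrimitiveVec t.1 → (t.2 : ℕ) < A →
      Row κ n q t ∈ Submodule.span κ (Row κ n q '' {t | t ∈ B ∧ (t.2 : ℕ) < A})) :
    (jetset n D1).card ≤ (B.filter fun t => (t.2 : ℕ) < A).card := by
  classical
  by_contra hlt
  push Not at hlt
  let M : (jetset n D1 → κ) →ₗ[κ] ((B.filter fun t => (t.2 : ℕ) < A) → κ) :=
    { toFun := fun c t => ∑ d, c d * Row κ n q t.1 (fun j => ((d.1 j : ℕ) : ZMod q))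
      map_add' := fun c c' => by
        ext t; simp [add_mul, Finset.sum_add_distrib]
      map_smul' := fun r c => by
        ext t; simp [Finset.mul_sum, mul_assoc] }
  have hker : LinearMap.ker M ≠ ⊥ := LinearMap.ker_ne_bot_of_finrank_lt (by
    rw [Module.finrank_fintype_fun_eq_card, Module.finrank_fintype_fun_eq_card, Fintype.card_coe, Fintype.card_coe]
    exact hlt)
  obtain ⟨c, hc, hc0⟩ := Submodule.exists_mem_ne_zero_of_ne_bot hker
  rw [LinearMap.mem_ker] at hc
  let ψ : ((Fin n → ZMod q) → κ) →ₗ[κ] κ :=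
    { toFun := fun r => ∑ d, c d * r (fun j => ((d.1 j : ℕ) : ZMod q))
      map_add' := fun r r' => by simp [mul_add, Finset.sum_add_distrib]
      map_smul' := fun s r => by simp [Finset.mul_sum, mul_left_comm] }
  have hψ : Submodule.span κ (Row κ n q '' {t | t ∈ B ∧ (t.2 : ℕ) < A}) ≤ LinearMap.ker ψ := by
    rw [Submodule.span_le]
    rintro _ ⟨t, ht, rfl⟩
    have := congrFun hc ⟨t, by simpa using ht⟩
    simpa [M, ψ] using this
  let c' : (Fin n →₀ ℕ) → κ := fun d => if h : d ∈ jetset n D1 then c ⟨d, h⟩ else 0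
  have key := vanish p n A L D1 hn hA hD c' (by
    rintro U ⟨j0, hj0⟩
    rw [X_sub_C_pow_dvd_iff, X_pow_dvd_iff]
    intro i hi
    have hprim : IsPrimitiveVec (fun j => (U j : ZMod q)) := by
      have hu : IsUnit ((U j0 : ℕ) : ZMod q) := by
        rw [ZMod.isUnit_iff_coprime, hq]
        exact Nat.Coprime.pow_right _ (((Nat.Prime.coprime_iff_not_dvd Fact.out).2 hj0).symm)
      obtain ⟨u, hu⟩ := hu
      refine ⟨Pi.single j0 ((u⁻¹ : (ZMod q)ˣ) : ZMod q), ?_⟩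
      rw [Finset.sum_eq_single j0]
      · rw [Pi.single_eq_same]; simp only [← hu, Units.inv_mul]
      · intro b _ hb; simp [hb]
      · simp
    have h1 := hψ (hB (fun j => (U j : ZMod q), ⟨i, by omega⟩) hprim hi)
    rw [LinearMap.mem_ker] at h1
    have h2 : ∑ d : jetset n D1, c d * (((∑ j, U j * d.1 j).choose i : ℕ) : κ) = 0 := by
      rw [← h1]
      simp only [ψ, LinearMap.coe_mk]
      refine Finset.sum_congr rfl fun d _ => ?_
      rw [row_nat p K n q hq U d.1 ⟨i, by omega⟩]
    rw [← h2, ← Finset.sum_coe_sort (jetset n D1)]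
    simp only [Polynomial.sum_comp, Polynomial.mul_comp, C_comp, Polynomial.pow_comp, X_comp, finsetSum_coeff]
    refine Finset.sum_congr rfl fun d _ => ?_
    simp only [map_one]
    rw [coeff_C_mul, coeff_X_add_one_pow]
    simp [c'])
  apply hc0
  ext d
  have := key d d.2
  simpa [c'] using this

lemma isUnit_nat {p K q : ℕ} (hK : 1 ≤ K) (hq : q = p ^ K) (m : ℕ) :
    IsUnit ((m : ℕ) : ZMod q) ↔ m.Coprime p := by
  rw [ZMod.isUnit_iff_coprime, hq, Nat.coprime_pow_right_iff (by omega)]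

lemma prim_iff {n p K q : ℕ} (hp : p.Prime) (hK : 1 ≤ K) (hq : q = p ^ K) [NeZero q]
    (u : Fin n → ZMod q) : IsPrimitiveVec u ↔ ∃ j, IsUnit (u j) := by
  constructor
  · rintro ⟨v, hv⟩
    by_contra hno
    push Not at hno
    have hpq : p ∣ q := by rw [hq]; exact dvd_pow_self p (by omega)
    have hz : ∀ j, ZMod.castHom hpq (ZMod p) (u j) = 0 := by
      intro j
      have h1 := hno j
      rw [← ZMod.natCast_zmod_val (u j), isUnit_nat hK hq,
        Nat.coprime_comm, Nat.Prime.coprime_iff_not_dvd hp, not_not] at h1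
      rw [← ZMod.natCast_zmod_val (u j), map_natCast]
      exact (ZMod.natCast_eq_zero_iff _ _).2 h1
    have h2 := congrArg (ZMod.castHom hpq (ZMod p)) hv
    rw [map_sum, map_one] at h2
    simp only [map_mul, hz, mul_zero, Finset.sum_const_zero] at h2
    have : Fact p.Prime := ⟨hp⟩
    exact zero_ne_one h2
  · rintro ⟨j0, u0, hu⟩
    refine ⟨Pi.single j0 ((u0⁻¹ : (ZMod q)ˣ) : ZMod q), ?_⟩
    rw [Finset.sum_eq_single j0]
    · rw [Pi.single_eq_same]; simp only [← hu, Units.inv_mul]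
    · intro b _ hb; simp [hb]
    · simp

lemma gl_e {n : ℕ} {R : Type*} [CommRing R] (u : Fin n → R) (i : Fin n) (hu : IsUnit (u i)) :
    ∃ h : (Matrix (Fin n) (Fin n) R)ˣ, h.1.mulVec (Pi.single i 1) = u := by
  have hdet : ((1 : Matrix (Fin n) (Fin n) R).updateCol i u).det = u i := by
    rw [← Matrix.cramer_apply, Matrix.cramer_one]; rfl
  have hunit : IsUnit ((1 : Matrix (Fin n) (Fin n) R).updateCol i u) := by
    rw [Matrix.isUnit_iff_isUnit_det, hdet]; exact hu
  obtain ⟨h, hh⟩ := hunit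
  refine ⟨h, ?_⟩
  rw [hh, Matrix.mulVec_single_one]
  ext j; simp [Matrix.col]

lemma gl_trans {n p K q : ℕ} (hp : p.Prime) (hK : 1 ≤ K) (hq : q = p ^ K) [NeZero q]
    (u w : Fin n → ZMod q) (hu : IsPrimitiveVec u) (hw : IsPrimitiveVec w) :
    ∃ h : (Matrix (Fin n) (Fin n) (ZMod q))ˣ, h.1.mulVec u = w := by
  obtain ⟨i, hi⟩ := (prim_iff hp hK hq u).1 hu
  obtain ⟨j, hj⟩ := (prim_iff hp hK hq w).1 hw
  obtain ⟨a, ha⟩ := gl_e u i hi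
  obtain ⟨b, hb⟩ := gl_e w j hj
  have hs : IsUnit ((Equiv.swap i j).permMatrix (ZMod q)) := by
    rw [Matrix.isUnit_iff_isUnit_det, Matrix.det_permutation]
    exact ((Equiv.Perm.sign (Equiv.swap i j)).isUnit.map (Int.castRingHom (ZMod q)))
  obtain ⟨s, hs⟩ := hs
  refine ⟨b * s * a⁻¹, ?_⟩
  have ha' : (a⁻¹).1.mulVec u = Pi.single i 1 := by
    rw [← ha, Matrix.mulVec_mulVec, Units.inv_mul, Matrix.one_mulVec]
  have hs' : s.1.mulVec (Pi.single i 1) = Pi.single j 1 := by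
    rw [hs, Matrix.permMatrix_mulVec]
    ext l
    simp only [Function.comp, Pi.single_apply]
    by_cases hl : l = j
    · subst hl; simp
    · rw [if_neg hl, if_neg]
      intro h
      apply hl
      have := congrArg (Equiv.swap i j) h
      simpa using this
  rw [Units.val_mul, Units.val_mul, ← Matrix.mulVec_mulVec, ha', ← Matrix.mulVec_mulVec, hs', hb]

lemma prim_mulVec {n q : ℕ} (h : (Matrix (Fin n) (Fin n) (ZMod q))ˣ) (u : Fin n → ZMod q)
    (hu : IsPrimitiveVec u) : IsPrimitiveVec (h.1.mulVec u) := by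
  obtain ⟨v, hv⟩ := hu
  refine ⟨Matrix.vecMul v (h⁻¹).1, ?_⟩
  change Matrix.vecMul v (h⁻¹).1 ⬝ᵥ (h.1.mulVec u) = 1
  rw [← Matrix.dotProduct_mulVec, Matrix.mulVec_mulVec, Units.inv_mul, Matrix.one_mulVec]
  exact hv

/-- act and reduce -/
def act {n q N : ℕ} (hNq : N ∣ q) (g : (Matrix (Fin n) (Fin n) (ZMod q))ˣ) (u : Fin n → ZMod q) :
    Fin n → ZMod N := fun j => ZMod.castHom hNq (ZMod N) (g.1.mulVec u j)

lemma prim_act {n q N : ℕ} (hNq : N ∣ q) (g : (Matrix (Fin n) (Fin n) (ZMod q))ˣ)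
    (u : Fin n → ZMod q) (hu : IsPrimitiveVec u) : IsPrimitiveVec (act hNq g u) := by
  obtain ⟨v, hv⟩ := prim_mulVec g u hu
  refine ⟨fun j => ZMod.castHom hNq (ZMod N) (v j), ?_⟩
  simp only [act]
  simp_rw [← map_mul]
  rw [← map_sum, hv, map_one]

lemma act_mul {n q N : ℕ} (hNq : N ∣ q) (h g : (Matrix (Fin n) (Fin n) (ZMod q))ˣ)
    (u : Fin n → ZMod q) :
    act hNq (h * g) u = (h.1.map (ZMod.castHom hNq (ZMod N))).mulVec (act hNq g u) := by
  ext j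
  simp only [act, Units.val_mul, ← Matrix.mulVec_mulVec]
  rw [RingHom.map_mulVec]
  rfl

lemma count_le {n p k K q N : ℕ} (hp : p.Prime) (hk : 1 ≤ k) (hkK : k ≤ K) (hq : q = p ^ K)
    (hN : N = p ^ k) [NeZero q] [NeZero N] (hNq : N ∣ q)
    (u : Fin n → ZMod q) (w w' : Fin n → ZMod N) (hw : IsPrimitiveVec w) (hw' : IsPrimitiveVec w') :
    Nat.card {g : (Matrix (Fin n) (Fin n) (ZMod q))ˣ //
      ∃ c : (ZMod N)ˣ, act hNq g u = (c : ZMod N) • w} ≤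
    Nat.card {g : (Matrix (Fin n) (Fin n) (ZMod q))ˣ //
      ∃ c : (ZMod N)ˣ, act hNq g u = (c : ZMod N) • w'} := by
  have lift : ∀ w : Fin n → ZMod N, IsPrimitiveVec w → ∃ x : Fin n → ZMod q, IsPrimitiveVec x ∧
      (fun j => ZMod.castHom hNq (ZMod N) (x j)) = w := by
    intro w hw
    refine ⟨fun j => ((w j).val : ZMod q), ?_, ?_⟩
    · rw [prim_iff hp (by omega) hq]
      obtain ⟨j, hj⟩ := (prim_iff hp hk hN w).1 hw
      refine ⟨j, ?_⟩
      rw [← ZMod.natCast_zmod_val (w j), isUnit_nat hk hN] at hj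
      rw [isUnit_nat (by omega) hq]
      exact hj
    · ext j
      rw [map_natCast, ZMod.natCast_zmod_val]
  obtain ⟨x, hx, hxw⟩ := lift w hw
  obtain ⟨x', hx', hxw'⟩ := lift w' hw'
  obtain ⟨h, hh⟩ := gl_trans hp (by omega) hq x x' hx hx'
  have hmap : (h.1.map (ZMod.castHom hNq (ZMod N))).mulVec w = w' := by
    rw [← hxw, ← hxw', ← hh]
    ext j
    rw [RingHom.map_mulVec]
    rfl
  refine Nat.card_le_card_of_injective (fun g => ⟨h * g.1, ?_⟩) ?_
  · obtain ⟨c, hc⟩ := g.2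
    refine ⟨c, ?_⟩
    rw [act_mul, hc, Matrix.mulVec_smul, hmap]
  · intro g g' hg
    simpa [Subtype.ext_iff] using hg

lemma averaging {n p k K q N : ℕ} (hp : p.Prime) (hk : 1 ≤ k) (hkK : k ≤ K) (hq : q = p ^ K)
    (hN : N = p ^ k) [NeZero q] [NeZero N] (hNq : N ∣ q)
    (P : Finset (Fin n → ZMod N)) (hP : IsProjRepSet N n P)
    (F : (Fin n → ZMod N) → ℕ) (hF : ∀ (c : (ZMod N)ˣ) w, F ((c : ZMod N) • w) = F w)
    (u : Fin n → ZMod q) (hu : IsPrimitiveVec u) :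
    P.card * ∑ g : (Matrix (Fin n) (Fin n) (ZMod q))ˣ, F (act hNq g u) =
      Fintype.card (Matrix (Fin n) (Fin n) (ZMod q))ˣ * ∑ w ∈ P, F w := by
  classical
  let c : (Fin n → ZMod N) → ℕ := fun w => Nat.card {g : (Matrix (Fin n) (Fin n) (ZMod q))ˣ //
      ∃ c : (ZMod N)ˣ, act hNq g u = (c : ZMod N) • w}
  have gen : ∀ F : (Fin n → ZMod N) → ℕ, (∀ (c : (ZMod N)ˣ) w, F ((c : ZMod N) • w) = F w) →
      ∑ g : (Matrix (Fin n) (Fin n) (ZMod q))ˣ, F (act hNq g u) = ∑ w ∈ P, c w * F w := by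
    intro F hF
    have h1 : ∀ g : (Matrix (Fin n) (Fin n) (ZMod q))ˣ, F (act hNq g u) =
        ∑ w ∈ P, if ∃ c : (ZMod N)ˣ, act hNq g u = (c : ZMod N) • w then F w else 0 := by
      intro g
      obtain ⟨w, ⟨hwP, a, ha⟩, huniq⟩ := hP.2 _ (prim_act hNq g u hu)
      rw [Finset.sum_eq_single w]
      · rw [if_pos ⟨a, ha⟩, ha, hF]
      · intro b hb hbw
        rw [if_neg]
        exact fun h => hbw (huniq b ⟨hb, h⟩)
      · exact fun h => absurd hwP h
    simp_rw [h1]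
    rw [Finset.sum_comm]
    refine Finset.sum_congr rfl fun w _ => ?_
    rw [← Finset.sum_filter, Finset.sum_const, smul_eq_mul]
    congr 1
    simp only [c]
    rw [Nat.card_eq_fintype_card, Fintype.card_subtype]
  have hc : ∀ w ∈ P, ∀ w' ∈ P, c w = c w' := fun w hw w' hw' =>
    le_antisymm (count_le hp hk hkK hq hN hNq u w w' (hP.1 w hw) (hP.1 w' hw'))
      (count_le hp hk hkK hq hN hNq u w' w (hP.1 w' hw') (hP.1 w hw))
  have hone := gen (fun _ => 1) (fun _ _ => rfl)
  rw [gen F hF]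
  simp only [mul_one, Finset.sum_const, Finset.card_univ, smul_eq_mul] at hone
  rw [hone, Finset.mul_sum, Finset.mul_sum]
  refine Finset.sum_congr rfl fun w hw => ?_
  rw [Finset.sum_congr rfl (fun w' hw' => hc w' hw' w hw), Finset.sum_const, smul_eq_mul]
  ring

lemma fstar_smul {N n : ℕ} [NeZero N] (f : (Fin n → ZMod N) → ℕ) (c : (ZMod N)ˣ)
    (w : Fin n → ZMod N) : fstar f ((c : ZMod N) • w) = fstar f w := by
  unfold fstar
  congr 1
  ext a
  refine Fintype.sum_equiv (Units.mulRight c) _ _ fun t => ?_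
  simp [smul_smul]

lemma left_g {O κ : Type*} [CommRing O] [IsDomain O] [ValuationRing O] [Field κ] [Algebra O ℂ]
    [IsFractionRing O ℂ] (φ : O →+* κ) (n p K q N : ℕ) [Fact p.Prime] [CharP κ p]
    [NeZero N] [NeZero q] (hq : q = p ^ K) (hNq : N ∣ q)
    (ζ : O) (hζ : IsPrimitiveRoot ζ N) (hφ : φ ζ = 1) (f : (Fin n → ZMod N) → ℕ)
    (B : Finset ((Fin n → ZMod q) × Fin q)) (hB : LinearIndepOn κ (Row κ n q) (B : Set _))
    (g : (Matrix (Fin n) (Fin n) (ZMod q))ˣ) :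
    (B.filter fun t => (t.2 : ℕ) < p * fstar f (act hNq g t.1)).card ≤
      ∑ x, (jetset n (p * f x)).card := by
  classical
  let T := {t // t ∈ B.filter fun t => (t.2 : ℕ) < p * fstar f (act hNq g t.1)}
  have hcard : Fintype.card T = (B.filter fun t => (t.2 : ℕ) < p * fstar f (act hNq g t.1)).card :=
    by rw [Fintype.card_subtype]; congr 1; ext t; simp
  rw [← hcard]
  have h1 : LinearIndependent κ (fun t : T => Row κ n q t.1) := by
    have h2 : LinearIndepOn κ (Row κ n q)
        ((B.filter fun t => (t.2 : ℕ) < p * fstar f (act hNq g t.1) : Finset _) : Set _) :=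
      hB.mono (by intro t ht; simp at ht; exact ht.1)
    exact h2
  have hsurj : Function.Surjective (fun v : Fin n → ZMod q => Matrix.vecMul v g.1) := by
    intro v
    refine ⟨Matrix.vecMul v (g⁻¹).1, ?_⟩
    simp only
    rw [Matrix.vecMul_vecMul, Units.inv_mul, Matrix.vecMul_one]
  have h3 := h1.map' (LinearMap.funLeft κ κ (fun v : Fin n → ZMod q => Matrix.vecMul v g.1))
    (LinearMap.ker_eq_bot.2 (LinearMap.funLeft_injective_of_surjective _ _ _ hsurj))
  refine left_bound (K := ℂ) (V := Fin n → ZMod q) φ n p N ζ hζ hφ f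
    (fun t : T => fun j => (g.1.mulVec t.1.1 j).val) (fun t => t.1.2)
    (fun v j => (v j).val) ?_ ?_
  · rintro ⟨t, ht⟩
    have h4 := (Finset.mem_filter.1 ht).2
    have h5 : (fun j => (((g.1.mulVec t.1 j).val : ℕ) : ZMod N)) = act hNq g t.1 := by
      ext j
      simp [act, ZMod.natCast_val]
    simp only [h5]
    exact h4
  · have he : (fun (t : T) (v : Fin n → ZMod q) =>
        (((∑ j, (g.1.mulVec t.1.1 j).val * (v j).val).choose (t.1.2 : ℕ) : ℕ) : κ)) =
        ((LinearMap.funLeft κ κ (fun v : Fin n → ZMod q => Matrix.vecMul v g.1)) ∘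
          fun t : T => Row κ n q t.1) := by
      ext t v
      rw [← row_nat p K n q hq]
      simp only [ZMod.natCast_zmod_val, Function.comp, LinearMap.funLeft_apply, Row]
      congr 3
      change (g.1.mulVec t.1.1) ⬝ᵥ v = t.1.1 ⬝ᵥ Matrix.vecMul v g.1
      rw [dotProduct_comm, Matrix.dotProduct_mulVec, dotProduct_comm]
    rw [← he] at h3
    exact h3

theorem main_ineq (n p k L : ℕ) (hn : 1 ≤ n) (hp : p.Prime) (hk : 1 ≤ k)
    (N : ℕ) [NeZero N] (hN : N = p ^ k)
    (P : Finset (Fin n → ZMod N)) (hP : IsProjRepSet N n P)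
    (f : (Fin n → ZMod N) → ℕ) (hL : ∀ w ∈ P, fstar f w ≤ p ^ L) :
    ∑ w ∈ P, (jetset n ((p * fstar f w + L) / (L + 1))).card ≤
      P.card * ∑ x, (jetset n (p * f x)).card := by
  classical
  obtain ⟨O, ζ, hchar, hζ, hres⟩ := exists_setup p N k hp hN
  have : Fact p.Prime := ⟨hp⟩
  let κ := IsLocalRing.ResidueField O
  have : CharP κ p := hchar
  let K := L + 1 + k
  obtain ⟨q, hq⟩ : ∃ q, q = p ^ K := ⟨_, rfl⟩
  have : NeZero q := ⟨by rw [hq]; exact pow_ne_zero _ hp.ne_zero⟩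
  have hNq : N ∣ q := by rw [hN, hq]; exact pow_dvd_pow _ (by omega)
  have hqL : p ^ (L + 1) ≤ q := by rw [hq]; exact Nat.pow_le_pow_right hp.pos (by omega)
  obtain ⟨B0, hB1, hB2, hB3⟩ := adapted (κ := κ) (Row κ n q) {t | IsPrimitiveVec t.1}
    (fun t => (t.2 : ℕ)) q
  obtain ⟨B, rfl⟩ : ∃ B : Finset ((Fin n → ZMod q) × Fin q), (B : Set _) = B0 :=
    ⟨(Set.toFinite B0).toFinset, by simp⟩
  set J := ∑ x, (jetset n (p * f x)).card with hJ
  let G := (Matrix (Fin n) (Fin n) (ZMod q))ˣ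
  have hleft : ∀ g : G, (B.filter fun t => (t.2 : ℕ) < p * fstar f (act hNq g t.1)).card ≤ J :=
    fun g => left_g (IsLocalRing.residue O) n p K q N hq hNq ζ hζ hres f B hB2 g
  have hright : ∀ w ∈ P, (jetset n ((p * fstar f w + L) / (L + 1))).card ≤
      (B.filter fun t => (t.2 : ℕ) < p * fstar f w).card := by
    intro w hw
    have hA : p * fstar f w ≤ p ^ (L + 1) := by
      rw [pow_succ, mul_comm]; exact Nat.mul_le_mul_right _ (hL w hw)
    refine right_count (κ := κ) p n (p * fstar f w) L _ K q hq hn hA (hA.trans hqL) ?_ B ?_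
    · intro s hs
      have h1 : s + 1 ≤ (p * fstar f w + L) / (L + 1) := hs
      rw [Nat.le_div_iff_mul_le (by omega)] at h1
      nlinarith
    · intro t ht hlt
      exact hB3 _ (hA.trans hqL) ⟨t, ⟨ht, hlt⟩, rfl⟩
  have havg : P.card * ∑ g : G, (B.filter fun t => (t.2 : ℕ) < p * fstar f (act hNq g t.1)).card =
      Fintype.card G * ∑ w ∈ P, (B.filter fun t => (t.2 : ℕ) < p * fstar f w).card := by
    simp only [Finset.card_filter]
    rw [Finset.sum_comm, Finset.sum_comm (s := P), Finset.mul_sum, Finset.mul_sum]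
    refine Finset.sum_congr rfl fun t ht => ?_
    exact averaging hp hk (by omega : k ≤ K) hq hN hNq P hP
      (fun w => if (t.2 : ℕ) < p * fstar f w then 1 else 0)
      (fun c w => by simp only [fstar_smul]) t.1 (hB1 ht).1
  have hG : 0 < Fintype.card G := Fintype.card_pos
  refine le_of_mul_le_mul_left (a := Fintype.card G) ?_ hG
  calc Fintype.card G * ∑ w ∈ P, (jetset n ((p * fstar f w + L) / (L + 1))).card
      ≤ Fintype.card G * ∑ w ∈ P, (B.filter fun t => (t.2 : ℕ) < p * fstar f w).card :=
        Nat.mul_le_mul_left _ (Finset.sum_le_sum hright)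
    _ = P.card * ∑ g : G, (B.filter fun t => (t.2 : ℕ) < p * fstar f (act hNq g t.1)).card :=
        havg.symm
    _ ≤ P.card * ∑ g : G, J := Nat.mul_le_mul_left _ (Finset.sum_le_sum fun g _ => hleft g)
    _ = Fintype.card G * (P.card * J) := by
        rw [Finset.sum_const, smul_eq_mul, Finset.card_univ]; ring

theorem stmt3 (n p k : ℕ) (hn : 1 ≤ n) (hp : p.Prime) (hnp : n < p) (hk : 1 ≤ k)
    (N : ℕ) [NeZero N] (hN : N = p ^ k)
    (P : Finset (Fin n → ZMod N)) (hP : IsProjRepSet N n P)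
    (f : (Fin n → ZMod N) → ℕ) (hf : ∃ x, f x ≠ 0) :
    (∑ x : Fin n → ZMod N, (f x : ℝ) ^ n) ≥
      ((((⌈Real.log ((P.sup (fstar f) : ℕ) : ℝ) / Real.log p⌉ : ℤ) : ℝ) + 1) ^ n)⁻¹ *
      ((1 + (n : ℝ) / p) ^ n)⁻¹ *
      (P.card : ℝ)⁻¹ * ∑ u ∈ P, (fstar f u : ℝ) ^ n := by
  have hp1 : (1 : ℝ) < p := by exact_mod_cast hp.one_lt
  have hlogp : 0 < Real.log p := Real.log_pos hp1
  have hnn : 0 ≤ ⌈Real.log ((P.sup (fstar f) : ℕ) : ℝ) / Real.log p⌉ :=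
    Int.ceil_nonneg (div_nonneg (Real.log_natCast_nonneg _) hlogp.le)
  obtain ⟨L, hLc⟩ := Int.eq_ofNat_of_zero_le hnn
  have hLM : P.sup (fstar f) ≤ p ^ L := by
    rcases Nat.eq_zero_or_pos (P.sup (fstar f)) with h0 | h0
    · rw [h0]; exact Nat.zero_le _
    · have h1 := Int.le_ceil (Real.log ((P.sup (fstar f) : ℕ) : ℝ) / Real.log p)
      rw [hLc, div_le_iff₀ hlogp] at h1
      have h2 : Real.log ((P.sup (fstar f) : ℕ) : ℝ) ≤ Real.log ((p : ℝ) ^ L) := by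
        rw [Real.log_pow]; exact_mod_cast h1
      rw [Real.log_le_log_iff (by exact_mod_cast h0) (by positivity)] at h2
      exact_mod_cast h2
  have hmain := main_ineq n p k L hn hp hk N hN P hP f
    (fun w hw => (Finset.le_sup (f := fstar f) hw).trans hLM)
  rw [hLc]
  have hpn : (0 : ℝ) < (p : ℝ) ^ n := by positivity
  have hE : (0 : ℝ) < (1 + (n : ℝ) / p) ^ n := by positivity
  have hLn : (0 : ℝ) < ((L : ℝ) + 1) ^ n := by positivity
  have hfac : (0 : ℝ) < (n.factorial : ℝ) := by exact_mod_cast n.factorial_pos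
  have h1 : ∀ w, (p : ℝ) ^ n * (fstar f w : ℝ) ^ n ≤ ((L : ℝ) + 1) ^ n *
      ((n.factorial : ℝ) * (jetset n ((p * fstar f w + L) / (L + 1))).card) := by
    intro w
    have h2 := jetset_lower n ((p * fstar f w + L) / (L + 1)) hn
    have h3 : p * fstar f w ≤ (L + 1) * ((p * fstar f w + L) / (L + 1)) := by
      have h4 := Nat.div_add_mod (p * fstar f w + L) (L + 1)
      have h5 := Nat.mod_lt (p * fstar f w + L) (by omega : L + 1 > 0)
      omega
    have h6 : (p * fstar f w) ^ n ≤
        (L + 1) ^ n * (n.factorial * (jetset n ((p * fstar f w + L) / (L + 1))).card) :=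
      (Nat.pow_le_pow_left h3 n).trans (by rw [mul_pow]; exact Nat.mul_le_mul_left _ h2)
    rw [mul_pow] at h6
    exact_mod_cast h6
  have h2 : (n.factorial : ℝ) * ∑ x, ((jetset n (p * f x)).card : ℝ) ≤
      (p : ℝ) ^ n * (1 + (n : ℝ) / p) ^ n * ∑ x, (f x : ℝ) ^ n := by
    rw [Finset.mul_sum, Finset.mul_sum]
    refine Finset.sum_le_sum fun x _ => ?_
    refine (jetset_upper n p (f x) hn hp.pos).trans (le_of_eq ?_)
    rw [mul_pow]; ring
  have h3 : ((∑ w ∈ P, ((jetset n ((p * fstar f w + L) / (L + 1))).card : ℝ))) ≤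
      P.card * ∑ x, ((jetset n (p * f x)).card : ℝ) := by exact_mod_cast hmain
  have h4 : (p : ℝ) ^ n * ∑ w ∈ P, (fstar f w : ℝ) ^ n ≤
      (p : ℝ) ^ n * (((L : ℝ) + 1) ^ n * (1 + (n : ℝ) / p) ^ n * P.card * ∑ x, (f x : ℝ) ^ n) := by
    calc (p : ℝ) ^ n * ∑ w ∈ P, (fstar f w : ℝ) ^ n
        ≤ ∑ w ∈ P, ((L : ℝ) + 1) ^ n *
          ((n.factorial : ℝ) * (jetset n ((p * fstar f w + L) / (L + 1))).card) := by
          rw [Finset.mul_sum]; exact Finset.sum_le_sum fun w _ => h1 w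
      _ = ((L : ℝ) + 1) ^ n * ((n.factorial : ℝ) *
          ∑ w ∈ P, ((jetset n ((p * fstar f w + L) / (L + 1))).card : ℝ)) := by
          rw [Finset.mul_sum, Finset.mul_sum]
      _ ≤ ((L : ℝ) + 1) ^ n * ((n.factorial : ℝ) *
          (P.card * ∑ x, ((jetset n (p * f x)).card : ℝ))) := by gcongr
      _ = ((L : ℝ) + 1) ^ n * P.card * ((n.factorial : ℝ) *
          ∑ x, ((jetset n (p * f x)).card : ℝ)) := by ring
      _ ≤ ((L : ℝ) + 1) ^ n * P.card *
          ((p : ℝ) ^ n * (1 + (n : ℝ) / p) ^ n * ∑ x, (f x : ℝ) ^ n) := by gcongr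
      _ = _ := by ring
  have h5 := le_of_mul_le_mul_left h4 hpn
  rcases Nat.eq_zero_or_pos P.card with hc | hc
  · rw [hc]
    simp only [Nat.cast_zero, inv_zero, mul_zero, zero_mul, ge_iff_le]
    positivity
  · have hc' : (0 : ℝ) < P.card := by exact_mod_cast hc
    rw [ge_iff_le, ← mul_inv, ← mul_inv, inv_mul_le_iff₀ (by push_cast; positivity)]
    push_cast
    exact h5
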